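/- arXiv:2508.18335 — 4 statements merged into one kernel-verified Lean document; each statement's English description precedes it below -/
import Mathlib

section
/- Let n ≥ 0 be an even integer and let 0 ≤ y ≤ n/2. The number of walks of length n in S = {(x,y) ∈ ℤ² : x ≥ 1, y ≥ 0} that start at (1,0), end at (1,y), use steps from {(1,0), (−1,0), (−1,1)}, and stay in S at every intermediate point, is equal to (1/(n+1))·C(n+1, (n+2)/2)·C(n/2, y). -/
/-!
A walk of length `n` with `u` steps `(1,0)` and `d = n - u` steps of the two kinds `(-1,0)`,
`(-1,1)` ends at abscissa `1 + u - d`. Its sequence of abscissas is a ballot path, and the ordinate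
of the end point is the number of down steps that are of the second kind, which may be chosen
freely. Hence the number of walks ending at `(1 + u - d, y)` is `ballot u d * C(d, y)`, where
`ballot u d` counts ballot paths. This is `encard_walks`, proved by induction on the length by
removing the last step (`encard_walks_succ`). The closed form
`(u + 1) * ballot u d = (u + 1 - d) * C(u + d, d)` (`ballot_closed_form`), at `u = d = n / 2`,
turns the count into the stated formula.
-/

/-- The walks of length `n` in the quadrant `x ≥ 1`, `y ≥ 0` from `(1, 0)` to `p`. -/
def walks (n : ℕ) (p : ℤ × ℤ) : Set (Fin (n + 1) → ℤ × ℤ) :=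
  {P | P 0 = (1, 0) ∧
    (∀ i : Fin n, P i.succ - P i.castSucc ∈ ({(1, 0), (-1, 0), (-1, 1)} : Set (ℤ × ℤ))) ∧
    (∀ i, 1 ≤ (P i).1 ∧ 0 ≤ (P i).2) ∧
    P (Fin.last n) = p}

/-- The number of sequences of `u` up steps and `d` down steps no prefix of which has more down
steps than up steps. -/
def ballot : ℕ → ℕ → ℕ
  | _, 0 => 1
  | 0, _ + 1 => 0
  | u + 1, d + 1 => if d ≤ u then ballot u (d + 1) + ballot (u + 1) d else 0

theorem ballot_zero (u : ℕ) : ballot u 0 = 1 := by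
  cases u <;> simp [ballot]

theorem ballot_of_lt {u d : ℕ} (h : u < d) : ballot u d = 0 := by
  cases d with
  | zero => omega
  | succ d =>
    cases u with
    | zero => simp [ballot]
    | succ u => simp [ballot]; omega

theorem ballot_closed_form (u d : ℕ) (h : d ≤ u + 1) :
    ((u : ℚ) + 1) * ballot u d = (u + 1 - d) * (u + d).choose d := by
  induction hn : u + d generalizing u d with
  | zero =>
    obtain ⟨rfl, rfl⟩ : u = 0 ∧ d = 0 := by omega
    simp [ballot]
  | succ n ih =>
    rcases Nat.lt_or_ge u d with hlt | hge
    · obtain rfl : d = u + 1 := by omega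
      simp [ballot_of_lt hlt]
    · obtain _ | d := d
      · simp [ballot_zero]
      obtain _ | u := u
      · omega
      have h1 := ih u (d + 1) (by omega) (by omega)
      have h2 := ih (u + 1) d (by omega) (by omega)
      have hb : ballot (u + 1) (d + 1) = ballot u (d + 1) + ballot (u + 1) d := by
        simp only [ballot, if_pos (show d ≤ u by omega)]
      have hc : (n + 1).choose (d + 1) = n.choose d + n.choose (d + 1) :=
        Nat.choose_succ_succ n d
      -- ratio of consecutive binomials, since `n - d = u + 1`
      have hr : n.choose (d + 1) * (d + 1) = n.choose d * (u + 1) := by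
        have := Nat.choose_succ_right_eq n d
        rwa [show n - d = u + 1 by omega] at this
      have hr' : (n.choose (d + 1) : ℚ) * (d + 1) = n.choose d * (u + 1) := by exact_mod_cast hr
      rw [hb, hc]
      push_cast at h1 h2 ⊢
      have hu : (u : ℚ) + 1 ≠ 0 := by positivity
      apply mul_left_cancel₀ hu
      linear_combination (u + 2 : ℚ) * h1 + (u + 1 : ℚ) * h2 - hr'

theorem walks_eq_empty_of_fst {n : ℕ} {p : ℤ × ℤ} (h : p.1 < 1) : walks n p = ∅ := by
  ext P
  simp only [walks, Set.mem_ofPred_eq, Set.mem_empty_iff_false, iff_false]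
  rintro ⟨-, -, hS, rfl⟩
  have := (hS (Fin.last n)).1
  omega

theorem walks_eq_empty_of_snd {n : ℕ} {p : ℤ × ℤ} (h : p.2 < 0) : walks n p = ∅ := by
  ext P
  simp only [walks, Set.mem_ofPred_eq, Set.mem_empty_iff_false, iff_false]
  rintro ⟨-, -, hS, rfl⟩
  have := (hS (Fin.last n)).2
  omega

/-- The abscissa grows by at most one per step. -/
theorem walks_eq_empty_of_far {n : ℕ} {p : ℤ × ℤ} (h : (n : ℤ) + 1 < p.1) : walks n p = ∅ := by
  ext P
  simp only [walks, Set.mem_ofPred_eq, Set.mem_empty_iff_false, iff_false]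
  rintro ⟨h0, hstep, -, rfl⟩
  have key : ∀ i : Fin (n + 1), (P i).1 ≤ i.val + 1 := by
    intro i
    induction i using Fin.induction with
    | zero => simp [h0]
    | succ i ih =>
      have := hstep i
      simp only [Set.mem_insert_iff, Set.mem_singleton_iff, Prod.ext_iff, Prod.fst_sub] at this
      simp only [Fin.val_castSucc, Fin.val_succ] at ih ⊢
      push_cast
      omega
  have := key (Fin.last n)
  simp only [Fin.val_last] at this
  omega

theorem snoc_mem_walks {n : ℕ} {p q : ℤ × ℤ} {Q : Fin (n + 1) → ℤ × ℤ} (h1 : 1 ≤ p.1)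
    (h2 : 0 ≤ p.2) (hs : p - q ∈ ({(1, 0), (-1, 0), (-1, 1)} : Set (ℤ × ℤ)))
    (hQ : Q ∈ walks n q) : (Fin.snoc Q p : Fin (n + 2) → ℤ × ℤ) ∈ walks (n + 1) p := by
  obtain ⟨h0, hstep, hS, hl⟩ := hQ
  refine ⟨?_, ?_, ?_, ?_⟩
  · rw [← Fin.castSucc_zero, Fin.snoc_castSucc (α := fun _ => ℤ × ℤ), h0]
  · intro i
    induction i using Fin.lastCases with
    | last =>
      rw [Fin.succ_last, Fin.snoc_last (α := fun _ => ℤ × ℤ),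
        Fin.snoc_castSucc (α := fun _ => ℤ × ℤ), hl]
      exact hs
    | cast i =>
      rw [Fin.succ_castSucc, Fin.snoc_castSucc (α := fun _ => ℤ × ℤ),
        Fin.snoc_castSucc (α := fun _ => ℤ × ℤ)]
      exact hstep i
  · intro i
    induction i using Fin.lastCases with
    | last => rw [Fin.snoc_last (α := fun _ => ℤ × ℤ)]; exact ⟨h1, h2⟩
    | cast i => rw [Fin.snoc_castSucc (α := fun _ => ℤ × ℤ)]; exact hS i
  · rw [Fin.snoc_last (α := fun _ => ℤ × ℤ)]

theorem init_mem_walks {n : ℕ} {p : ℤ × ℤ} {P : Fin (n + 2) → ℤ × ℤ}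
    (hP : P ∈ walks (n + 1) p) :
    (fun i : Fin (n + 1) => P i.castSucc) ∈ walks n (P (Fin.last n).castSucc) := by
  obtain ⟨h0, hstep, hS, -⟩ := hP
  exact ⟨h0, fun i => hstep i.castSucc, fun i => hS i.castSucc, rfl⟩

theorem walks_succ {n : ℕ} {p : ℤ × ℤ} (h1 : 1 ≤ p.1) (h2 : 0 ≤ p.2) :
    walks (n + 1) p = (fun Q => (Fin.snoc Q p : Fin (n + 2) → ℤ × ℤ)) ''
      (walks n (p - (1, 0)) ∪ (walks n (p - (-1, 0)) ∪ walks n (p - (-1, 1)))) := by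
  ext P
  constructor
  · intro hP
    refine ⟨fun i => P i.castSucc, ?_, ?_⟩
    · have hi := init_mem_walks hP
      obtain ⟨-, hstep, -, hl⟩ := hP
      have hs := hstep (Fin.last n)
      rw [Fin.succ_last, hl] at hs
      rcases hs with hs | hs | hs
      · left; rwa [← hs, sub_sub_cancel]
      · right; left; rwa [← hs, sub_sub_cancel]
      · right; right; rw [Set.mem_singleton_iff] at hs; rwa [← hs, sub_sub_cancel]
    · obtain ⟨-, -, -, hl⟩ := hP
      rw [← hl]
      exact Fin.snoc_init_self (α := fun _ => ℤ × ℤ) P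
  · rintro ⟨Q, hQ | hQ | hQ, rfl⟩ <;> exact snoc_mem_walks h1 h2 (by simp) hQ

theorem disjoint_walks {n : ℕ} {p q : ℤ × ℤ} (h : p ≠ q) : Disjoint (walks n p) (walks n q) := by
  rw [Set.disjoint_left]
  rintro P ⟨-, -, -, hp⟩ ⟨-, -, -, hq⟩
  exact h (hp.symm.trans hq)

/-- Counting walks by their last step. -/
theorem encard_walks_succ (n : ℕ) {a b : ℤ} (h1 : 1 ≤ a) (h2 : 0 ≤ b) :
    (walks (n + 1) (a, b)).encard = (walks n (a - 1, b)).encard +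
      ((walks n (a + 1, b)).encard + (walks n (a + 1, b - 1)).encard) := by
  rw [walks_succ h1 h2, Function.Injective.encard_image, Set.encard_union_eq,
    Set.encard_union_eq]
  · simp
  · exact disjoint_walks (by simp [Prod.ext_iff]; omega)
  · rw [Set.disjoint_union_right]
    constructor <;> apply disjoint_walks <;> simp [Prod.ext_iff] <;> omega
  · intro Q Q' h
    funext i
    have := congrFun h i.castSucc
    simpa using this

theorem encard_walks_zero (y : ℕ) :
    (walks 0 (1, (y : ℤ))).encard = (Nat.choose 0 y : ℕ∞) := by
  cases y with
  | zero =>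
    have : walks 0 (1, ((0 : ℕ) : ℤ)) = {fun _ => (1, 0)} := by
      ext P
      simp only [walks, Set.mem_ofPred_eq, Set.mem_singleton_iff]
      constructor
      · rintro ⟨h, -⟩
        funext i
        rw [show i = 0 from Subsingleton.elim (α := Fin 1) i 0, h]
      · rintro rfl
        simp
    rw [this]; simp
  | succ y =>
    have : walks 0 (1, ((y + 1 : ℕ) : ℤ)) = ∅ := by
      ext P
      simp only [walks, Set.mem_ofPred_eq, Set.mem_empty_iff_false, iff_false]
      rintro ⟨h, -, -, h'⟩
      have := congrArg Prod.snd (h.symm.trans h')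
      simp at this
      omega
    rw [this]; simp

theorem encard_walks (n u d y : ℕ) (h : u + d = n) :
    (walks n (1 + u - d, (y : ℤ))).encard = ((ballot u d * d.choose y : ℕ) : ℕ∞) := by
  induction n generalizing u d y with
  | zero =>
    obtain ⟨rfl, rfl⟩ : u = 0 ∧ d = 0 := by omega
    simpa [ballot_zero] using encard_walks_zero y
  | succ n ih =>
    rcases Nat.lt_or_ge u d with hlt | hge
    · rw [walks_eq_empty_of_fst (by simp; omega), ballot_of_lt hlt]
      simp
    obtain _ | u := u
    · omega
    rw [encard_walks_succ n (by omega) (by omega)]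
    obtain _ | d := d
    · -- a down step would have to come from an abscissa out of reach
      rw [walks_eq_empty_of_far (p := (_ + 1, (y : ℤ))) (by simp; omega),
        walks_eq_empty_of_far (p := (_ + 1, (y : ℤ) - 1)) (by simp; omega)]
      have := ih u 0 y (by omega)
      rw [ballot_zero] at this ⊢
      rw [← this]
      simp only [Set.encard_empty, add_zero]
      congr 3
      push_cast; ring
    have hb : ballot (u + 1) (d + 1) = ballot u (d + 1) + ballot (u + 1) d := by
      simp only [ballot, if_pos (show d ≤ u by omega)]
    have e1 : (1 + ((u + 1 : ℕ) : ℤ) - ((d + 1 : ℕ) : ℤ) - 1) = 1 + (u : ℤ) - ((d + 1 : ℕ) : ℤ) := by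
      push_cast; ring
    have e2 : (1 + ((u + 1 : ℕ) : ℤ) - ((d + 1 : ℕ) : ℤ) + 1) = 1 + ((u + 1 : ℕ) : ℤ) - (d : ℤ) := by
      push_cast; ring
    rw [e1, e2, ih u (d + 1) y (by omega), ih (u + 1) d y (by omega), hb]
    obtain _ | y := y
    · rw [walks_eq_empty_of_snd (by simp)]
      simp
    · rw [show (((y + 1 : ℕ) : ℤ) - 1) = (y : ℤ) by push_cast; ring, ih (u + 1) d y (by omega),
        Nat.choose_succ_succ d y]
      norm_cast
      ring

/-- For even `n ≥ 0` and `0 ≤ y ≤ n/2`, the number of walks of length `n` in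
`S = {(x,y) ∈ ℤ² : x ≥ 1, y ≥ 0}` starting at `(1,0)`, ending at `(1,y)`, with steps in
`{(1,0), (−1,0), (−1,1)}` and staying in `S`, equals `(1/(n+1))·C(n+1,(n+2)/2)·C(n/2,y)`. -/
theorem count_walks (n y : ℕ) (hn : Even n) (hy : y ≤ n / 2) :
    (n + 1) * ({P : Fin (n + 1) → ℤ × ℤ |
        P 0 = (1, 0) ∧
        (∀ i : Fin n, P i.succ - P i.castSucc ∈ ({(1, 0), (-1, 0), (-1, 1)} : Set (ℤ × ℤ))) ∧
        (∀ i, 1 ≤ (P i).1 ∧ 0 ≤ (P i).2) ∧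
        P (Fin.last n) = (1, (y : ℤ))} : Set (Fin (n + 1) → ℤ × ℤ)).ncard
      = (n + 1).choose ((n + 2) / 2) * (n / 2).choose y := by
  change (n + 1) * (walks n (1, (y : ℤ))).ncard = _
  obtain ⟨m, rfl⟩ := hn
  have h := encard_walks (m + m) m m y rfl
  rw [add_sub_cancel_right] at h
  rw [Set.ncard_def, h, ENat.toNat_natCast, show (m + m + 2) / 2 = m + 1 by omega,
    show (m + m) / 2 = m by omega, ← mul_assoc]
  congr 1
  have hq := ballot_closed_form m m (by omega)
  have hb : (m + 1) * ballot m m = (m + m).choose m := by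
    rw [add_sub_cancel_left, one_mul] at hq
    exact_mod_cast hq
  have hc := Nat.add_one_mul_choose_eq (m + m) m
  apply Nat.eq_of_mul_eq_mul_left (show 0 < m + 1 by omega)
  linear_combination (m + m + 1) * hb + hc
end

section
/- Let g ≥ 2 and N ≥ 2g + 2 be integers. Consider the simple graph G_{N−2,g} whose vertices are the walks of length at most N − 2 in S = {(x,y) ∈ ℤ² : x ≥ 1, y ≥ 0}, starting at (1,0), ending at (1,g), with steps in {(1,0), (−1,0), (−1,1)} and staying in S throughout, and whose edges join two distinct walks w₁ ≠ w₂ exactly when w₁ and w₂ both visit some common point (C, G) ∈ S with 1 ≤ G ≤ g − 1. Then the minimum degree of G_{N−2,g} is at least Δ, where Δ + 1 = (1/(2g+1))·C(2g+1, g+1) is the g-th Catalan number; that is, every such walk shares a point at an intermediate height 1 ≤ G ≤ g−1 with at least Δ other such walks. -/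
/-!
Each of the `catalan g` Dyck words of semilength `g` gives a walk of length `2g` (`U` is the step
`(1,0)`, `D` the step `(-1,1)`) whose last step is `(2,g-1) → (1,g)`.  A walk `w` crosses from
height `g-1` to height `g` by a step `(k+2,g-1) → (k+1,g)` for some `k ≥ 0`.  Since `x + 2y` grows
by at most one per step and `x` drops by at most one per step, `w` has length at least `2g + 2k`
(`MorseWalk.exists_crossing`).  Hence the last step of every Dyck walk may be replaced by the detour
`(1,0)^k, (-1,1), (-1,0)^k` without exceeding the length bound (`dyckDetour`).  The resulting
`catalan g` walks are distinct and all meet `w` at `(k+2,g-1)`; at most one of them is `w` itself.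
-/

/-- A walk of length `len ≤ L` in `S = {(x,y) ∈ ℤ² : x ≥ 1, y ≥ 0}`, starting at `(1,0)`,
ending at `(1,g)`, with steps in `{(1,0), (−1,0), (−1,1)}` and staying in `S`.  (The field
`frozen` normalizes the values beyond `len`, so that a walk is determined by its length and
its points.) -/
structure MorseWalk (L g : ℕ) where
  len : ℕ
  len_le : len ≤ L
  P : ℕ → ℤ × ℤ
  start : P 0 = (1, 0)
  finish : P len = (1, (g : ℤ))
  step : ∀ i < len, P (i + 1) - P i ∈ ({(1, 0), (-1, 0), (-1, 1)} : Set (ℤ × ℤ))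
  frozen : ∀ i, len ≤ i → P i = P len
  mem_S : ∀ i ≤ len, 1 ≤ (P i).1 ∧ 0 ≤ (P i).2

/-- The graph `G_{N−2,g}`: vertices are walks of length at most `N − 2` from `(1,0)` to
`(1,g)` in `S`; two distinct walks are adjacent exactly when they both visit a common point
`(C, G) ∈ S` with `1 ≤ G ≤ g − 1`. -/
def morseWalkGraph (L g : ℕ) : SimpleGraph (MorseWalk L g) :=
  SimpleGraph.fromRel (fun w₁ w₂ => ∃ C G : ℤ, 1 ≤ C ∧ 1 ≤ G ∧ G ≤ (g : ℤ) - 1 ∧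
    (∃ i ≤ w₁.len, w₁.P i = (C, G)) ∧ (∃ j ≤ w₂.len, w₂.P j = (C, G)))

/-- The position, after `i` steps from `(1,0)`, of the walk coded by a word in `U = (1,0)`,
`D = (-1,1)`. -/
def dyckPos (l : List DyckStep) (i : ℕ) : ℤ × ℤ :=
  (1 + ((l.take i).count DyckStep.U : ℤ) - ((l.take i).count DyckStep.D : ℤ),
    ((l.take i).count DyckStep.D : ℤ))

lemma dyckPos_succ (l : List DyckStep) (i : ℕ) (hi : i < l.length) :
    (l[i] = DyckStep.U ∧ dyckPos l (i + 1) = dyckPos l i + (1, 0)) ∨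
      (l[i] = DyckStep.D ∧ dyckPos l (i + 1) = dyckPos l i + (-1, 1)) := by
  rcases (l[i]).dichotomy with h | h
  · left
    refine ⟨h, ?_⟩
    simp [dyckPos, List.take_add_one, hi, h, List.count_append]
    ring
  · right
    refine ⟨h, ?_⟩
    simp [dyckPos, List.take_add_one, hi, h, List.count_append]
    ring

lemma eq_of_dyckPos_eq {l l' : List DyckStep} (hl : l.length = l'.length)
    (h : ∀ i ≤ l.length, dyckPos l i = dyckPos l' i) : l = l' := by
  refine List.ext_getElem hl fun i hi hi' => ?_
  have e0 := h i hi.le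
  have e1 := h (i + 1) hi
  rcases dyckPos_succ l i hi with ⟨a, b⟩ | ⟨a, b⟩ <;>
  rcases dyckPos_succ l' i hi' with ⟨a', b'⟩ | ⟨a', b'⟩ <;>
  simp_all

lemma dyckWord_length {g : ℕ} (p : DyckWord) (hp : p.semilength = g) :
    p.toList.length = 2 * g := by
  rw [← hp, p.two_mul_semilength_eq_length]

lemma dyckPos_mem (p : DyckWord) (i : ℕ) :
    1 ≤ (dyckPos p.toList i).1 ∧ 0 ≤ (dyckPos p.toList i).2 := by
  have := p.count_D_le_count_U i
  simp only [dyckPos]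
  omega

lemma dyckPos_end {g : ℕ} (p : DyckWord) (hp : p.semilength = g) :
    dyckPos p.toList (2 * g) = (1, (g : ℤ)) := by
  have h1 := p.count_U_eq_count_D
  have h2 : p.toList.count DyckStep.U = g := hp
  have h3 : p.toList.take (2 * g) = p.toList := by
    rw [← dyckWord_length p hp, List.take_length]
  simp [dyckPos, h3, ← h1, h2]

/-- The last letter of a nonempty Dyck word is `D`, so its walk ends with the step
`(2,g-1) → (1,g)`. -/
lemma dyckPos_penultimate {g : ℕ} (p : DyckWord) (hp : p.semilength = g) (hg : 1 ≤ g) :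
    dyckPos p.toList (2 * g - 1) = (2, (g : ℤ) - 1) := by
  have hl := dyckWord_length p hp
  have he := dyckPos_end p hp
  have hm := dyckPos_mem p (2 * g - 1)
  have hs := dyckPos_succ p.toList (2 * g - 1) (by omega)
  rw [show 2 * g - 1 + 1 = 2 * g by omega, he] at hs
  rcases hs with ⟨-, h⟩ | ⟨-, h⟩ <;> simp only [Prod.ext_iff, Prod.fst_add, Prod.snd_add] at h ⊢ <;>
    constructor <;> omega

/-- The walk of a Dyck word of semilength `g` with its last step `(-1,1)` replaced by
`k` steps `(1,0)`, one step `(-1,1)` and `k` steps `(-1,0)`.  The truncated subtraction keeps the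
position constant after time `2g + 2k`. -/
def dyckDetour {g L k : ℕ} (hg : 1 ≤ g) (hk : 2 * g + 2 * k ≤ L)
    (p : {p : DyckWord // p.semilength = g}) : MorseWalk L g where
  len := 2 * g + 2 * k
  len_le := hk
  P i := if i < 2 * g then dyckPos p.1.toList i
    else if i < 2 * g + k then ((i : ℤ) + 3 - 2 * g, (g : ℤ) - 1)
    else (1 + ((2 * g + 2 * k - i : ℕ) : ℤ), (g : ℤ))
  start := by
    rw [if_pos (by omega)]
    simp [dyckPos]
  finish := by
    rw [if_neg (by omega), if_neg (by omega)]
    simp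
  step i hi := by
    have hl := dyckWord_length p.1 p.2
    have hpen := dyckPos_penultimate p.1 p.2 hg
    simp only [Set.mem_insert_iff, Set.mem_singleton_iff]
    by_cases h1 : i + 1 < 2 * g
    · rw [if_pos h1, if_pos (by omega)]
      rcases dyckPos_succ p.1.toList i (by omega) with ⟨-, h⟩ | ⟨-, h⟩ <;> simp [h]
    rw [if_neg h1]
    by_cases h2 : i + 1 = 2 * g
    · obtain rfl : i = 2 * g - 1 := by omega
      rw [if_pos (show 2 * g - 1 < 2 * g by omega), hpen]
      split_ifs <;> simp only [Prod.mk_sub_mk, Prod.mk.injEq, sub_self, and_true] <;> omega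
    · rw [if_neg (show ¬ i < 2 * g by omega)]
      split_ifs <;> simp only [Prod.mk_sub_mk, Prod.mk.injEq, sub_self, and_true] <;> omega
  frozen i hi := by
    rw [if_neg (by omega), if_neg (by omega), if_neg (by omega), if_neg (by omega),
      Nat.sub_eq_zero_of_le hi, Nat.sub_self]
  mem_S i hi := by
    split_ifs
    · exact dyckPos_mem p.1 i
    · simp only; omega
    · simp only; omega

lemma dyckDetour_injective {g L k : ℕ} (hg : 1 ≤ g) (hk : 2 * g + 2 * k ≤ L) :
    Function.Injective (dyckDetour (g := g) hg hk) := by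
  intro p q hpq
  have hP := congrArg MorseWalk.P hpq
  have hl := dyckWord_length p.1 p.2
  have hl' := dyckWord_length q.1 q.2
  refine Subtype.ext (DyckWord.ext (eq_of_dyckPos_eq (by omega) fun i hi => ?_))
  rcases hi.lt_or_eq with h | h
  · have := congrFun hP i
    simpa only [dyckDetour, if_pos (show i < 2 * g by omega)] using this
  · rw [h, hl, dyckPos_end p.1 p.2, dyckPos_end q.1 q.2]

lemma dyckDetour_visits {g L k : ℕ} (hg : 1 ≤ g) (hk : 2 * g + 2 * k ≤ L)
    (p : {p : DyckWord // p.semilength = g}) :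
    ∃ i ≤ (dyckDetour hg hk p).len, (dyckDetour hg hk p).P i = ((k : ℤ) + 2, (g : ℤ) - 1) := by
  refine ⟨2 * g - 1 + k, by simp only [dyckDetour]; omega, ?_⟩
  simp only [dyckDetour]
  rcases Nat.eq_zero_or_pos k with rfl | h
  · rw [if_pos (by omega)]
    simpa using dyckPos_penultimate p.1 p.2 hg
  · rw [if_neg (by omega), if_pos (by omega)]
    simp only [Prod.mk.injEq, and_true]
    omega

namespace MorseWalk

variable {L g : ℕ} (w : MorseWalk L g)

lemma step_cases {i : ℕ} (hi : i < w.len) :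
    ((w.P (i + 1)).1 = (w.P i).1 + 1 ∧ (w.P (i + 1)).2 = (w.P i).2) ∨
    ((w.P (i + 1)).1 = (w.P i).1 - 1 ∧ (w.P (i + 1)).2 = (w.P i).2) ∨
    ((w.P (i + 1)).1 = (w.P i).1 - 1 ∧ (w.P (i + 1)).2 = (w.P i).2 + 1) := by
  have := w.step i hi
  simp only [Set.mem_insert_iff, Set.mem_singleton_iff, Prod.ext_iff, Prod.fst_sub,
    Prod.snd_sub] at this
  omega

lemma fst_add_two_mul_snd_le : ∀ i ≤ w.len, (w.P i).1 + 2 * (w.P i).2 ≤ i + 1 := by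
  intro i
  induction i with
  | zero => simp [w.start]
  | succ i ih =>
    intro hi
    have := ih (by omega)
    have := w.step_cases (i := i) (by omega)
    push_cast
    omega

lemma fst_le_add (i : ℕ) : ∀ d, i + d ≤ w.len → (w.P i).1 ≤ (w.P (i + d)).1 + d := by
  intro d
  induction d with
  | zero => simp
  | succ d ih =>
    intro hi
    have := ih (by omega)
    have := w.step_cases (i := i + d) (by omega)
    rw [← Nat.add_assoc]
    push_cast
    omega

/-- A walk leaves height `g-1` from some point `(k+2,g-1)`, and then has length at least
`2g + 2k`: reaching `(k+1,g)` takes at least `2g + k` steps, returning to `x = 1` at least `k`. -/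
lemma exists_crossing (hg : 1 ≤ g) :
    ∃ k : ℕ, 2 * g + 2 * k ≤ w.len ∧ ∃ i ≤ w.len, w.P i = ((k : ℤ) + 2, (g : ℤ) - 1) := by
  classical
  have hex : ∃ j, (g : ℤ) ≤ (w.P j).2 := ⟨w.len, by simp [w.finish]⟩
  -- The first time height `g` is attained.
  obtain ⟨j, hj, hmin⟩ : ∃ j, (g : ℤ) ≤ (w.P j).2 ∧ ∀ m < j, ¬ (g : ℤ) ≤ (w.P m).2 :=
    ⟨Nat.find hex, Nat.find_spec hex, fun m hm => Nat.find_min hex hm⟩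
  have hjlen : j ≤ w.len := by
    by_contra h
    exact hmin w.len (by omega) (by simp [w.finish])
  obtain ⟨i, rfl⟩ : ∃ i, j = i + 1 := by
    refine Nat.exists_eq_succ_of_ne_zero ?_
    rintro rfl
    rw [w.start] at hj
    simp only at hj
    omega
  have h1 := hmin i (by omega)
  have h2 := w.step_cases (i := i) (by omega)
  have h3 := (w.mem_S (i + 1) hjlen).1
  have h4 := w.fst_add_two_mul_snd_le (i + 1) hjlen
  have h5 := w.fst_le_add (i + 1) (w.len - (i + 1)) (by omega)
  rw [Nat.add_sub_cancel' hjlen, w.finish] at h5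
  simp only at h5
  refine ⟨((w.P (i + 1)).1 - 1).toNat, by omega, i, by omega, ?_⟩
  rw [Prod.ext_iff]
  simp only
  omega

lemma mem_box : ∀ i ≤ w.len, w.P i ∈ Set.Icc ((-L - 1 : ℤ), (-L - 1 : ℤ)) (L + 1, L + 1) := by
  intro i hi
  have h1 := w.mem_S i hi
  have h2 := w.fst_add_two_mul_snd_le i hi
  have h3 := w.len_le
  simp only [Set.mem_Icc, Prod.le_def]
  omega

/-- Finiteness is needed because `Set.ncard` of an infinite set is `0`. -/
instance finite : Finite (MorseWalk L g) := by
  let B : Set (ℤ × ℤ) := Set.Icc ((-L - 1 : ℤ), (-L - 1 : ℤ)) (L + 1, L + 1)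
  have : Finite B := (Set.finite_Icc _ _).to_subtype
  have hB : ∀ (w : MorseWalk L g) (i : ℕ), w.P i ∈ B := by
    intro w i
    rcases le_total i w.len with h | h
    · exact w.mem_box i h
    · rw [w.frozen i h]
      exact w.mem_box _ le_rfl
  let F : MorseWalk L g → Fin (L + 1) × (Fin (L + 1) → B) := fun w =>
    (⟨w.len, Nat.lt_succ_of_le w.len_le⟩, fun i => ⟨w.P i, hB w i⟩)
  refine Finite.of_injective F fun w w' h => ?_
  simp only [F, Prod.mk.injEq, Fin.mk.injEq] at h
  obtain ⟨hlen, hP⟩ := h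
  have key : ∀ i ≤ L, w.P i = w'.P i := fun i hi => by
    simpa using congrFun hP ⟨i, Nat.lt_succ_of_le hi⟩
  have hPP : w.P = w'.P := by
    funext i
    rcases le_total i L with h | h
    · exact key i h
    · rw [w.frozen i (w.len_le.trans h), w'.frozen i (w'.len_le.trans h), w.finish, w'.finish]
  cases w
  cases w'
  simp_all

end MorseWalk

/-- For `g ≥ 2` and `N ≥ 2g + 2`, the minimum degree of the graph
`G_{N−2,g}` is at least `Δ`, where `Δ + 1 = (1/(2g+1))·C(2g+1,g+1)` is the `g`-th Catalan
number: every walk is adjacent to at least `Δ` other walks. -/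
theorem morseWalkGraph_min_degree (g N : ℕ) (hg : 2 ≤ g) (hN : 2 * g + 2 ≤ N) :
    ∀ w : MorseWalk (N - 2) g,
      catalan g - 1 ≤ ((morseWalkGraph (N - 2) g).neighborSet w).ncard := by
  intro w
  have hg1 : 1 ≤ g := by omega
  obtain ⟨k, hk, hw⟩ := w.exists_crossing hg1
  have hkL := hk.trans w.len_le
  have hcard : (Set.range (dyckDetour (g := g) hg1 hkL)).ncard = catalan g := by
    rw [← DyckWord.card_dyckWord_semilength_eq_catalan, ← Nat.card_eq_fintype_card,
      ← Set.image_univ, Set.ncard_image_of_injective _ (dyckDetour_injective hg1 hkL),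
      Set.ncard_univ]
  have hsub : Set.range (dyckDetour (g := g) hg1 hkL) \ {w} ⊆
      (morseWalkGraph (N - 2) g).neighborSet w := by
    rintro _ ⟨⟨p, rfl⟩, hne⟩
    rw [SimpleGraph.mem_neighborSet, morseWalkGraph, SimpleGraph.fromRel_adj]
    refine ⟨fun h => hne h.symm, Or.inl ⟨(k : ℤ) + 2, (g : ℤ) - 1, by omega, by omega, le_rfl,
      hw, dyckDetour_visits hg1 hkL p⟩⟩
  calc catalan g - 1
      ≤ (Set.range (dyckDetour (g := g) hg1 hkL) \ {w}).ncard := by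
        rw [← hcard]
        exact Set.pred_ncard_le_ncard_sdiff_singleton _ _
    _ ≤ _ := Set.ncard_le_ncard hsub (Set.toFinite _)
end

section
/- Let G be a finite simple graph with n vertices in which every vertex has degree at least δ, where δ ≥ 1 is an integer. Then G has a dominating set of at most n·(1 − δ/(δ+1)^{1 + 1/δ}) vertices, i.e. a set D of vertices such that every vertex of G either belongs to D or is adjacent to a vertex of D, with |D| ≤ n·(1 − (δ+1)^{−1/δ} + (δ+1)^{−(δ+1)/δ}). -/
/-!
The proof is the alteration method. Put `q = (δ+1)^{-1/δ}` and let `S` be a random set containing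
each vertex independently with probability `1 - q`. Adding to `S` every vertex whose closed
neighbourhood misses `S` gives a dominating set. A fixed set `A` is missed by `S` with probability
`q ^ |A|` (`sum_weight_disjoint`), so the expected size of this dominating set is at most
`n (1 - q + q ^ (δ+1))`, closed neighbourhoods having at least `δ + 1` elements. Some outcome is at
most the expectation.
-/

open Finset

/-- The probability that a random subset of `V`, omitting each element independently with
probability `q`, equals `S`. -/
noncomputable def subsetWeight {V : Type*} [Fintype V] [DecidableEq V] (q : ℝ) (S : Finset V) : ℝ :=
  (∏ _a ∈ S, (1 - q)) * ∏ _a ∈ univ \ S, q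

/-- The random subset misses a fixed set `A` with probability `q ^ |A|`. -/
lemma sum_weight_disjoint {V : Type*} [Fintype V] [DecidableEq V] (q : ℝ) (A : Finset V) :
    ∑ S : Finset V, subsetWeight q S * (if Disjoint A S then 1 else 0) = q ^ A.card := by
  -- Expand `∏ (f a + q)`, where `f` is `1 - q` off `A` and `0` on `A`, over all subsets.
  have h := Finset.prod_add (fun a : V => if a ∈ A then (0 : ℝ) else 1 - q) (fun _ => q) univ
  have h1 : ∏ a : V, ((if a ∈ A then (0 : ℝ) else 1 - q) + q) = q ^ A.card := by
    have : ∀ a : V, ((if a ∈ A then (0 : ℝ) else 1 - q) + q) = if a ∈ A then q else 1 := by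
      intro a; split_ifs <;> ring
    simp only [this]
    rw [Finset.prod_ite_mem, univ_inter, prod_const]
  rw [← h1, h, Finset.powerset_univ]
  refine Finset.sum_congr rfl fun S _ => ?_
  unfold subsetWeight
  split_ifs with hd
  · rw [mul_one]
    congr 1
    refine Finset.prod_congr rfl fun a ha => ?_
    rw [if_neg (Finset.disjoint_right.mp hd ha)]
  · obtain ⟨a, haA, haS⟩ := Finset.not_disjoint_iff.mp hd
    have h0 : ∏ i ∈ S, (if i ∈ A then (0 : ℝ) else 1 - q) = 0 :=
      Finset.prod_eq_zero haS (if_pos haA)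
    rw [h0, mul_zero, zero_mul]

/-- The alteration bound for an arbitrary omission probability `q`. -/
lemma exists_dominating_card_le {V : Type*} [Fintype V] (G : SimpleGraph V)
    [DecidableRel G.Adj] (δ : ℕ) (hdeg : ∀ v : V, δ ≤ G.degree v) (q : ℝ)
    (hq0 : 0 ≤ q) (hq1 : q ≤ 1) :
    ∃ D : Finset V, (∀ v : V, v ∈ D ∨ ∃ u ∈ D, G.Adj u v) ∧
      (D.card : ℝ) ≤ (Fintype.card V : ℝ) * (1 - q + q ^ (δ + 1)) := by
  classical
  let N : V → Finset V := fun v => insert v (G.neighborFinset v)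
  have hN : ∀ v, δ + 1 ≤ (N v).card := by
    intro v
    have : v ∉ G.neighborFinset v := by simp
    simp only [N, card_insert_of_notMem this, SimpleGraph.card_neighborFinset_eq_degree]
    exact Nat.succ_le_succ (hdeg v)
  let D : Finset V → Finset V := fun S => S ∪ univ.filter fun v => Disjoint (N v) S
  let ind : Finset V → Finset V → ℝ := fun A S => if Disjoint A S then 1 else 0
  have hD : ∀ S, ((D S).card : ℝ) ≤ ∑ v, (1 - ind {v} S + ind (N v) S) := by
    intro S
    have h1 : ((D S).card : ℝ) ≤ S.card + (univ.filter fun v => Disjoint (N v) S).card := by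
      exact_mod_cast card_union_le _ _
    have h2 : (S.card : ℝ) = ∑ v, (1 - ind {v} S) := by
      have : ∀ v, 1 - ind {v} S = if v ∈ S then 1 else 0 := by
        intro v; by_cases hv : v ∈ S <;> simp [ind, hv]
      simp [this]
    have h3 : ((univ.filter fun v => Disjoint (N v) S).card : ℝ) = ∑ v, ind (N v) S := by
      simp [ind]
    rw [Finset.sum_add_distrib, ← h2, ← h3]
    exact h1
  have hw : ∀ S : Finset V, 0 ≤ subsetWeight q S := fun S =>
    mul_nonneg (prod_nonneg fun _ _ => by linarith) (prod_nonneg fun _ _ => hq0)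
  have hsum : ∑ S : Finset V, subsetWeight q S = 1 := by
    simpa using sum_weight_disjoint q (∅ : Finset V)
  have hexp : ∑ S : Finset V, subsetWeight q S * (D S).card
      ≤ (Fintype.card V : ℝ) * (1 - q + q ^ (δ + 1)) := by
    calc ∑ S : Finset V, subsetWeight q S * (D S).card
        ≤ ∑ S : Finset V, subsetWeight q S * ∑ v, (1 - ind {v} S + ind (N v) S) :=
          sum_le_sum fun S _ => mul_le_mul_of_nonneg_left (hD S) (hw S)
      _ = ∑ v, ∑ S : Finset V, (subsetWeight q S - subsetWeight q S * ind {v} S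
            + subsetWeight q S * ind (N v) S) := by
          simp only [Finset.mul_sum]
          rw [Finset.sum_comm]
          refine sum_congr rfl fun v _ => sum_congr rfl fun S _ => by ring
      _ = ∑ v, (1 - q + q ^ (N v).card) := by
          refine sum_congr rfl fun v _ => ?_
          rw [sum_add_distrib, sum_sub_distrib, hsum, sum_weight_disjoint, sum_weight_disjoint,
            card_singleton, pow_one]
      _ ≤ ∑ _v : V, (1 - q + q ^ (δ + 1)) :=
          sum_le_sum fun v _ => by
            have := pow_le_pow_of_le_one hq0 hq1 (hN v)
            linarith
      _ = _ := by rw [sum_const, card_univ, nsmul_eq_mul]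
  obtain ⟨S, hS⟩ : ∃ S, ((D S).card : ℝ) ≤ (Fintype.card V : ℝ) * (1 - q + q ^ (δ + 1)) := by
    by_contra! hcon
    obtain ⟨S₀, -, hS₀⟩ : ∃ S ∈ (univ : Finset (Finset V)), subsetWeight q S ≠ 0 :=
      exists_ne_zero_of_sum_ne_zero (by rw [hsum]; exact one_ne_zero)
    have : ∑ S : Finset V, subsetWeight q S * ((Fintype.card V : ℝ) * (1 - q + q ^ (δ + 1)))
        < ∑ S : Finset V, subsetWeight q S * (D S).card :=
      sum_lt_sum (fun S _ => mul_le_mul_of_nonneg_left (hcon S).le (hw S))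
        ⟨S₀, mem_univ _, mul_lt_mul_of_pos_left (hcon S₀) ((hw S₀).lt_of_ne' hS₀)⟩
    rw [← Finset.sum_mul, hsum, one_mul] at this
    linarith
  refine ⟨D S, fun v => ?_, hS⟩
  by_cases hv : Disjoint (N v) S
  · left; simp [D, hv]
  · obtain ⟨u, huN, huS⟩ := Finset.not_disjoint_iff.mp hv
    have huD : u ∈ D S := mem_union_left _ huS
    rcases mem_insert.mp huN with rfl | hu
    · exact Or.inl huD
    · exact Or.inr ⟨u, huD, ((G.mem_neighborFinset v u).mp hu).symm⟩

/-- A finite simple graph on `n` vertices with minimum degree at least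
`δ ≥ 1` has a dominating set of at most `n·(1 − (δ+1)^{−1/δ} + (δ+1)^{−(δ+1)/δ})
= n·(1 − δ/(δ+1)^{1+1/δ})` vertices. -/
theorem dominating_set_bound {V : Type*} [Fintype V] (G : SimpleGraph V)
    [DecidableRel G.Adj] (δ : ℕ) (hδ : 1 ≤ δ) (hdeg : ∀ v : V, δ ≤ G.degree v) :
    ∃ D : Finset V,
      (∀ v : V, v ∈ D ∨ ∃ u ∈ D, G.Adj u v) ∧
      (D.card : ℝ) ≤ (Fintype.card V : ℝ) *
        (1 - Real.rpow ((δ : ℝ) + 1) (-(1 : ℝ) / (δ : ℝ))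
           + Real.rpow ((δ : ℝ) + 1) (-((δ : ℝ) + 1) / (δ : ℝ))) := by
  have hb : (0 : ℝ) ≤ (δ : ℝ) + 1 := by positivity
  have hpow : Real.rpow ((δ : ℝ) + 1) (-((δ : ℝ) + 1) / (δ : ℝ))
      = (Real.rpow ((δ : ℝ) + 1) (-(1 : ℝ) / (δ : ℝ))) ^ (δ + 1) := by
    simp only [Real.rpow_eq_pow]
    rw [← Real.rpow_mul_natCast hb]
    congr 1
    push_cast
    ring
  rw [hpow]
  refine exists_dominating_card_le G δ hdeg _ (Real.rpow_nonneg hb _) ?_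
  refine Real.rpow_le_one_of_one_le_of_nonpos (by simp) ?_
  exact div_nonpos_of_nonpos_of_nonneg (by norm_num) (by positivity)
end

section
/- Let g ≥ 2 and N ≥ 2g + 2 be integers. Consider the simple graph G_{N−2,g} whose vertices are the walks of length at most N − 2 in S = {(x,y) ∈ ℤ² : x ≥ 1, y ≥ 0}, starting at (1,0), ending at (1,g), with steps in {(1,0), (−1,0), (−1,1)} and staying in S throughout, and whose edges join two distinct walks w₁ ≠ w₂ exactly when w₁ and w₂ both visit some common point (C, G) ∈ S with 1 ≤ G ≤ g − 1. Let Δ + 1 = (1/(2g+1))·C(2g+1, g+1) be the g-th Catalan number and let M_{N−2} = ∑ (1/(n+1))·C(n+1, n/2 + 1)·C(n/2, g), the sum taken over even integers n with 2g ≤ n ≤ N − 2. Then G_{N−2,g} has exactly M_{N−2} vertices and has a dominating set D of at most M_{N−2}·(1 − Δ/(Δ+1)^{1 + 1/Δ}) vertices, i.e. a set D of walks such that every vertex of G_{N−2,g} either belongs to D or is adjacent to a member of D. -/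
/-- `M_{N−2} = ∑ (1/(n+1))·C(n+1, n/2+1)·C(n/2, g)`, the sum over even `n` with
`2g ≤ n ≤ N−2`; reindexed by `n = 2k` with `g ≤ k ≤ (N−2)/2` (the natural-number division
`C(2k+1, k+1)/(2k+1)` is exact and equals the `k`-th Catalan number). -/
def morseWalkCount (N g : ℕ) : ℕ :=
  ∑ k ∈ Finset.Icc g ((N - 2) / 2), ((2 * k + 1).choose (k + 1) / (2 * k + 1)) * k.choose g

/-! ### Counting walks -/

/-- The walks in `S` of length `n` from `(1,0)` to `p`, encoded as sequences that stay at `p`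
from time `n` on. -/
def walkSet (n : ℕ) (p : ℤ × ℤ) : Set (ℕ → ℤ × ℤ) :=
  {P | P 0 = (1, 0) ∧
    (∀ i < n, P (i + 1) - P i ∈ ({(1, 0), (-1, 0), (-1, 1)} : Set (ℤ × ℤ))) ∧
    (∀ i, n ≤ i → P i = p) ∧ ∀ i ≤ n, 1 ≤ (P i).1 ∧ 0 ≤ (P i).2}

/-- Extends a walk of length `n` by a last step to `p`. -/
def extendWalk (n : ℕ) (p : ℤ × ℤ) (Q : ℕ → ℤ × ℤ) : ℕ → ℤ × ℤ :=
  fun i => if i ≤ n then Q i else p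

lemma extendWalk_injOn (n : ℕ) (p q : ℤ × ℤ) :
    Set.InjOn (extendWalk n p) (walkSet n q) := by
  intro Q hQ R hR h
  funext i
  by_cases hi : i ≤ n
  · have := congrFun h i
    simpa [extendWalk, hi] using this
  · rw [hQ.2.2.1 i (by omega), hR.2.2.1 i (by omega)]

lemma extendWalk_mem {n : ℕ} {p q : ℤ × ℤ} (hp : 1 ≤ p.1 ∧ 0 ≤ p.2)
    (hpq : p - q ∈ ({(1, 0), (-1, 0), (-1, 1)} : Set (ℤ × ℤ))) {Q : ℕ → ℤ × ℤ}
    (hQ : Q ∈ walkSet n q) : extendWalk n p Q ∈ walkSet (n + 1) p := by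
  obtain ⟨h0, hs, hf, hm⟩ := hQ
  refine ⟨by simpa [extendWalk] using h0, ?_, ?_, ?_⟩
  · intro i hi
    by_cases hin : i < n
    · have h1 : i + 1 ≤ n := hin
      have h2 : i ≤ n := hin.le
      simpa only [extendWalk, h1, h2, if_true] using hs i hin
    · have h1 : i = n := by omega
      subst h1
      simpa [extendWalk, hf i le_rfl] using hpq
  · intro i hi
    have : ¬ i ≤ n := by omega
    simp [extendWalk, this]
  · intro i hi
    by_cases hin : i ≤ n
    · simpa only [extendWalk, hin, if_true] using hm i hin
    · simpa only [extendWalk, hin, if_false] using hp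

lemma walkSet_succ (n : ℕ) (p : ℤ × ℤ) (hp : 1 ≤ p.1 ∧ 0 ≤ p.2) :
    walkSet (n + 1) p = Set.image (extendWalk n p) (walkSet n (p - (1, 0))) ∪
      (Set.image (extendWalk n p) (walkSet n (p - (-1, 0))) ∪
        Set.image (extendWalk n p) (walkSet n (p - (-1, 1)))) := by
  ext P
  constructor
  · rintro ⟨h0, hs, hf, hm⟩
    have hrestr : ∀ q, P n = q → P ∈ Set.image (extendWalk n p) (walkSet n q) := by
      intro q hq
      refine ⟨fun i => if i ≤ n then P i else q, ⟨by simpa using h0, ?_, ?_, ?_⟩, ?_⟩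
      · intro i hi
        have h1 : i + 1 ≤ n := hi
        have h2 : i ≤ n := hi.le
        simpa only [h1, h2, if_true] using hs i (by omega)
      · intro i hi
        by_cases hin : i ≤ n
        · have : i = n := by omega
          subst this
          simpa using hq
        · simp [hin]
      · intro i hi
        simpa only [hi, if_true] using hm i (by omega)
      · funext i
        by_cases hin : i ≤ n
        · simp [extendWalk, hin]
        · simp [extendWalk, hin, hf i (by omega)]
    have hlast := hs n (by omega)
    rw [hf (n + 1) le_rfl] at hlast
    have key : ∀ s, p - P n = s → P n = p - s := by
      intro s hs
      rw [← hs]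
      abel
    simp only [Set.mem_insert_iff, Set.mem_singleton_iff] at hlast
    rcases hlast with h | h | h
    · exact Or.inl (hrestr _ (key _ h))
    · exact Or.inr (Or.inl (hrestr _ (key _ h)))
    · exact Or.inr (Or.inr (hrestr _ (key _ h)))
  · rintro (⟨Q, hQ, rfl⟩ | ⟨Q, hQ, rfl⟩ | ⟨Q, hQ, rfl⟩) <;>
      exact extendWalk_mem hp (by simp) hQ

lemma walkSet_eq_empty {n : ℕ} {p : ℤ × ℤ} (hp : ¬ (1 ≤ p.1 ∧ 0 ≤ p.2)) :
    walkSet n p = ∅ := by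
  ext P
  simp only [Set.mem_empty_iff_false, iff_false]
  rintro ⟨-, -, hf, hm⟩
  exact hp (hf n le_rfl ▸ hm n le_rfl)

lemma walkSet_zero (p : ℤ × ℤ) :
    walkSet 0 p = if p = (1, 0) then {fun _ => (1, 0)} else ∅ := by
  ext P
  split_ifs with h
  · subst h
    constructor
    · rintro ⟨-, -, hf, -⟩
      funext i
      exact hf i (Nat.zero_le i)
    · rintro rfl
      exact ⟨rfl, by simp, by simp, by simp⟩
  · simp only [Set.mem_empty_iff_false, iff_false]
    rintro ⟨h0, -, hf, -⟩
    exact h (hf 0 le_rfl ▸ h0)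

lemma walkSet_finite (n : ℕ) : ∀ p, (walkSet n p).Finite := by
  induction n with
  | zero => intro p; rw [walkSet_zero]; split_ifs <;> simp
  | succ n ih =>
    intro p
    by_cases hp : 1 ≤ p.1 ∧ 0 ≤ p.2
    · rw [walkSet_succ n p hp]
      exact ((ih _).image _).union (((ih _).image _).union ((ih _).image _))
    · rw [walkSet_eq_empty hp]
      exact Set.finite_empty

lemma extendWalk_disjoint {n : ℕ} {p q r : ℤ × ℤ} (h : q ≠ r) :
    Disjoint (Set.image (extendWalk n p) (walkSet n q)) (Set.image (extendWalk n p) (walkSet n r)) := by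
  rw [Set.disjoint_left]
  rintro _ ⟨Q, hQ, rfl⟩ ⟨R, hR, hRQ⟩
  apply h
  have := congrFun hRQ n
  simp only [extendWalk, le_refl, if_true] at this
  rw [← hQ.2.2.1 n le_rfl, ← hR.2.2.1 n le_rfl, this]

lemma ncard_walkSet_succ (n : ℕ) (p : ℤ × ℤ) (hp : 1 ≤ p.1 ∧ 0 ≤ p.2) :
    (walkSet (n + 1) p).ncard = (walkSet n (p - (1, 0))).ncard +
      ((walkSet n (p - (-1, 0))).ncard + (walkSet n (p - (-1, 1))).ncard) := by
  have hne : ∀ s t : ℤ × ℤ, s ≠ t → p - s ≠ p - t := fun s t hst h => hst (sub_right_injective h)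
  have hfin := fun q => (walkSet_finite n q).image (extendWalk n p)
  rw [walkSet_succ n p hp, Set.ncard_union_eq _ (hfin _) ((hfin _).union (hfin _)),
    Set.ncard_union_eq (extendWalk_disjoint (hne _ _ (by simp))) (hfin _) (hfin _),
    (extendWalk_injOn _ _ _).ncard_image,
    (extendWalk_injOn _ _ _).ncard_image,
    (extendWalk_injOn _ _ _).ncard_image]
  exact Set.disjoint_union_right.2
    ⟨extendWalk_disjoint (hne _ _ (by simp)), extendWalk_disjoint (hne _ _ (by simp))⟩

/-- A nonempty `walkSet` has abscissa at most `n + 1`, of the right parity. -/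
lemma walkSet_constraint (n : ℕ) :
    ∀ p, (walkSet n p).Nonempty → p.1 ≤ n + 1 ∧ (n + 1 - p.1) % 2 = 0 := by
  induction n with
  | zero =>
    rintro p ⟨P, h⟩
    rw [walkSet_zero] at h
    split_ifs at h with hp
    · subst hp; simp
    · exact h.elim
  | succ n ih =>
    rintro p ⟨P, h⟩
    by_cases hp : 1 ≤ p.1 ∧ 0 ≤ p.2
    · rw [walkSet_succ n p hp] at h
      rcases h with ⟨Q, hQ, -⟩ | ⟨Q, hQ, -⟩ | ⟨Q, hQ, -⟩ <;>
      · have := ih _ ⟨Q, hQ⟩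
        simp only [Prod.fst_sub] at this
        push_cast
        omega
    · rw [walkSet_eq_empty hp] at h
      exact h.elim

/-- The number of walks with `u` ascending and `d` descending steps, `y` of the latter being
diagonal, is the ballot number times `C(d, y)`.  The boundary case `d = u + 1`, where both sides
vanish, is included to make the induction work. -/
lemma ncard_walkSet (n : ℕ) : ∀ u d y : ℕ, u + d = n → d ≤ u + 1 →
    ((walkSet n (1 + u - d, y)).ncard : ℤ) =
      ((n.choose d : ℤ) - n.choose (u + 1)) * d.choose y := by
  induction n with
  | zero =>
    intro u d y h _
    obtain ⟨rfl, rfl⟩ : u = 0 ∧ d = 0 := by omega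
    rw [walkSet_zero]
    cases y with
    | zero => simp
    | succ y =>
      rw [if_neg]
      · simp
      · simp only [Prod.mk.injEq, not_and]
        intro _
        push_cast
        omega
  | succ n ih =>
    intro u d y h hd
    rcases Nat.lt_or_ge u d with hlt | hle
    · obtain rfl : d = u + 1 := by omega
      rw [walkSet_eq_empty (fun hp => by
        have := hp.1
        push_cast at this
        omega)]
      simp
    · rw [ncard_walkSet_succ n _ ⟨by simp; omega, by simp⟩]
      obtain ⟨u, rfl⟩ : ∃ v, u = v + 1 := ⟨u - 1, by omega⟩
      have h1 := ih u d y (by omega) (by omega)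
      have e1 : ((1 + ((u + 1 : ℕ) : ℤ) - d, (y : ℤ)) - (1, 0) : ℤ × ℤ) =
          (1 + (u : ℤ) - d, (y : ℤ)) := by
        ext <;> simp; ring
      rw [e1]
      push_cast
      rw [h1]
      cases d with
      | zero =>
        have hempty : ∀ z : ℤ, walkSet n (1 + ((u : ℤ) + 1) - 0 - -1, z) = ∅ := by
          intro z
          by_contra hne
          have := (walkSet_constraint n _ (Set.nonempty_iff_ne_empty.2 hne)).1
          simp only at this
          omega
        obtain rfl : u = n := by omega
        simp only [Nat.cast_zero, Prod.mk_sub_mk, hempty]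
        simp
      | succ d =>
        have e2 : ((1 + ((u : ℤ) + 1) - ((d + 1 : ℕ) : ℤ), (y : ℤ)) - (-1, 0) : ℤ × ℤ) =
            (1 + ((u + 1 : ℕ) : ℤ) - d, (y : ℤ)) := by
          ext <;> simp; ring
        push_cast at e2
        push_cast
        rw [e2]
        have h2 := ih (u + 1) d y (by omega) (by omega)
        push_cast at h2
        rw [h2]
        cases y with
        | zero =>
          rw [walkSet_eq_empty (p := _ - (-1, 1)) (by simp)]
          simp only [Nat.choose_succ_succ, Nat.choose_zero_right, Set.ncard_empty]
          push_cast
          ring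
        | succ y =>
          have e3 : ((1 + ((u : ℤ) + 1) - ((d : ℤ) + 1), ((y + 1 : ℕ) : ℤ)) - (-1, 1) : ℤ × ℤ) =
              (1 + ((u : ℤ) + 1) - d, (y : ℤ)) := by
            ext <;> simp; ring
          have h3 := ih (u + 1) d y (by omega) (by omega)
          push_cast at h3 e3 ⊢
          rw [e3, h3]
          simp only [Nat.choose_succ_succ]
          push_cast
          ring

lemma choose_div_eq_catalan (k : ℕ) : (2 * k + 1).choose (k + 1) / (2 * k + 1) = catalan k := by
  apply Nat.div_eq_of_eq_mul_right (by omega)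
  have h1 := Nat.add_one_mul_choose_eq (2 * k) k
  have h2 := succ_mul_catalan_eq_centralBinom k
  rw [Nat.centralBinom] at h2
  have : 0 < k + 1 := by omega
  apply Nat.eq_of_mul_eq_mul_right this
  rw [← h1, ← h2]
  ring

lemma ballot_eq_catalan (k : ℕ) :
    ((2 * k).choose k : ℤ) - (2 * k).choose (k + 1) = catalan k := by
  have h1 := Nat.choose_succ_right_eq (2 * k) k
  have h2 := succ_mul_catalan_eq_centralBinom k
  rw [Nat.centralBinom] at h2
  rw [show 2 * k - k = k by omega] at h1
  zify at h1 h2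
  have : (k + 1 : ℤ) ≠ 0 := by positivity
  apply mul_left_cancel₀ this
  rw [h2]
  linarith

lemma ncard_walkSet_even (k g : ℕ) :
    (walkSet (2 * k) (1, g)).ncard = catalan k * k.choose g := by
  have := ncard_walkSet (2 * k) k k g (by omega) (by omega)
  rw [ballot_eq_catalan, show (1 + (k : ℤ) - k) = 1 by ring] at this
  exact_mod_cast this

lemma ncard_walkSet_odd (n g : ℕ) (hn : n % 2 = 1) : (walkSet n (1, g)).ncard = 0 := by
  have : walkSet n (1, g) = ∅ := by
    by_contra hne
    have := (walkSet_constraint n _ (Set.nonempty_iff_ne_empty.2 hne)).2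
    simp only at this
    omega
  rw [this, Set.ncard_empty]

/-- Sorts the walks by length. -/
def morseWalkEquiv (L g : ℕ) :
    MorseWalk L g ≃ Σ n : Fin (L + 1), walkSet n.1 (1, (g : ℤ)) where
  toFun w := ⟨⟨w.len, Nat.lt_succ_of_le w.len_le⟩, w.P, w.start, w.step,
    fun i hi => (w.frozen i hi).trans w.finish, w.mem_S⟩
  invFun s :=
    { len := s.1
      len_le := Nat.le_of_lt_succ s.1.2
      P := s.2.1
      start := s.2.2.1
      finish := s.2.2.2.2.1 _ le_rfl
      step := s.2.2.2.1
      frozen := fun i hi => (s.2.2.2.2.1 i hi).trans (s.2.2.2.2.1 _ le_rfl).symm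
      mem_S := s.2.2.2.2.2 }
  left_inv _ := rfl
  right_inv _ := rfl

lemma card_morseWalk (N g : ℕ) : Nat.card (MorseWalk (N - 2) g) = morseWalkCount N g := by
  have hfin : ∀ n : Fin (N - 2 + 1), Finite (walkSet n.1 (1, (g : ℤ))) :=
    fun n => (walkSet_finite _ _).to_subtype
  rw [Nat.card_congr (morseWalkEquiv (N - 2) g), Nat.card_sigma]
  simp only [Nat.card_coe_set_eq]
  rw [Fin.sum_univ_eq_sum_range (fun n => (walkSet n (1, (g : ℤ))).ncard) (N - 2 + 1),
    morseWalkCount]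
  symm
  calc ∑ k ∈ Finset.Icc g ((N - 2) / 2), (2 * k + 1).choose (k + 1) / (2 * k + 1) * k.choose g
      = ∑ k ∈ Finset.Icc g ((N - 2) / 2), (walkSet (2 * k) (1, (g : ℤ))).ncard :=
        Finset.sum_congr rfl fun k _ => by rw [choose_div_eq_catalan, ncard_walkSet_even]
    _ = ∑ n ∈ (Finset.Icc g ((N - 2) / 2)).image (2 * ·), (walkSet n (1, (g : ℤ))).ncard := by
        rw [Finset.sum_image]
        intro a _ b _ h
        simp only at h
        omega
    _ = _ := by
        apply Finset.sum_subset
        · intro n hn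
          simp only [Finset.mem_image, Finset.mem_Icc] at hn
          obtain ⟨k, hk, rfl⟩ := hn
          simp only [Finset.mem_range]
          omega
        · intro n hn hn'
          rcases Nat.mod_two_eq_zero_or_one n with h | h
          · obtain ⟨k, rfl⟩ : ∃ k, n = 2 * k := ⟨n / 2, by omega⟩
            rw [ncard_walkSet_even, Nat.choose_eq_zero_of_lt, mul_zero]
            by_contra hk
            apply hn'
            simp only [Finset.mem_range] at hn
            exact Finset.mem_image.2 ⟨k, Finset.mem_Icc.2 ⟨by omega, by omega⟩, rfl⟩
          · exact ncard_walkSet_odd n g h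

/-! ### The dominating walk -/

/-- The points of the dominating walk: up to `(K + 1, 0)`, diagonally to `(K, 1)`, left to
`(g, 1)`, then along the antidiagonal to `(1, g)`. -/
def bigPath (K g : ℕ) (i : ℕ) : ℤ × ℤ :=
  if i ≤ K then (1 + i, 0)
  else if i + g ≤ 2 * K + 1 then (2 * K + 1 - i, 1)
  else if i ≤ 2 * K then (2 * K + 1 - i, i + g - 2 * K)
  else (1, g)

/-- The walk that dominates every other walk of length at most `L`. -/
def bigWalk (L g : ℕ) (hg : 2 ≤ g) (hL : 2 * g ≤ L) : MorseWalk L g where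
  len := 2 * (L / 2)
  len_le := by omega
  P := bigPath (L / 2) g
  start := by simp [bigPath]
  finish := by
    have h1 : ¬ 2 * (L / 2) ≤ L / 2 := by omega
    have h2 : ¬ 2 * (L / 2) + g ≤ 2 * (L / 2) + 1 := by omega
    simp only [bigPath, h1, h2, if_false, le_refl, if_true]
    ext <;> simp
  step := by
    intro i hi
    simp only [Set.mem_insert_iff, Set.mem_singleton_iff, bigPath]
    have hgK : g ≤ L / 2 := by omega
    generalize L / 2 = K at *
    split_ifs <;> simp only [Prod.mk_sub_mk, Prod.mk.injEq] <;> push_cast <;>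
      (try simp only [and_true, and_false, or_false, false_or]) <;> omega
  frozen := by
    intro i hi
    simp only [bigPath]
    generalize hK : L / 2 = K at *
    split_ifs <;> simp only [Prod.mk.injEq] <;> push_cast <;> omega
  mem_S := by
    intro i hi
    simp only [bigPath]
    generalize L / 2 = K at *
    split_ifs <;> simp only <;> omega

lemma MorseWalk.step_cases_s17 {L g : ℕ} (v : MorseWalk L g) {i : ℕ} (hi : i < v.len) :
    ((v.P (i + 1)).1 = (v.P i).1 + 1 ∧ (v.P (i + 1)).2 = (v.P i).2) ∨
    ((v.P (i + 1)).1 = (v.P i).1 - 1 ∧ (v.P (i + 1)).2 = (v.P i).2) ∨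
    ((v.P (i + 1)).1 = (v.P i).1 - 1 ∧ (v.P (i + 1)).2 = (v.P i).2 + 1) := by
  have := v.step i hi
  simp only [Set.mem_insert_iff, Set.mem_singleton_iff, Prod.ext_iff, Prod.fst_sub,
    Prod.snd_sub] at this
  omega

/-- Each step increases `x + 2y` by at most one. -/
lemma MorseWalk.height_bound {L g : ℕ} (v : MorseWalk L g) (i : ℕ) (hi : i ≤ v.len) :
    (v.P i).1 + 2 * (v.P i).2 ≤ 1 + i := by
  induction i with
  | zero => simp [v.start]
  | succ i ih =>
    have := ih (by omega)
    have := v.step_cases_s17 (i := i) (by omega)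
    push_cast
    omega

/-- Each step decreases `x` by at most one. -/
lemma MorseWalk.fst_bound {L g : ℕ} (v : MorseWalk L g) (a i : ℕ) (hi : a + i ≤ v.len) :
    (v.P a).1 ≤ (v.P (a + i)).1 + i ∧ (v.P a).2 ≤ (v.P (a + i)).2 := by
  induction i with
  | zero => simp
  | succ i ih =>
    have := ih (by omega)
    have := v.step_cases_s17 (i := a + i) (by omega)
    rw [← add_assoc]
    push_cast
    omega

/-- Every walk shares with `bigWalk` a point of height between `1` and `g - 1`. -/
lemma bigWalk_meets (L g : ℕ) (hg : 2 ≤ g) (hL : 2 * g ≤ L) (v : MorseWalk L g) :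
    ∃ C G : ℤ, 1 ≤ C ∧ 1 ≤ G ∧ G ≤ (g : ℤ) - 1 ∧
      (∃ i ≤ (bigWalk L g hg hL).len, (bigWalk L g hg hL).P i = (C, G)) ∧
      (∃ j ≤ v.len, v.P j = (C, G)) := by
  classical
  -- `a` is the first time at which the walk has positive height
  have hex : ∃ a, 1 ≤ (v.P a).2 := ⟨v.len, by rw [v.finish]; simp; omega⟩
  obtain ⟨a, ha, hmin⟩ : ∃ a, 1 ≤ (v.P a).2 ∧ ∀ m < a, ¬ 1 ≤ (v.P m).2 :=
    ⟨Nat.find hex, Nat.find_spec hex, fun m hm => Nat.find_min hex hm⟩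
  have hfin1 : (v.P v.len).1 = 1 := by rw [v.finish]
  have hfin2 : (v.P v.len).2 = g := by rw [v.finish]
  have halen : a ≤ v.len := by
    by_contra h
    exact hmin v.len (by omega) (by omega)
  have ha0 : a ≠ 0 := by
    rintro rfl
    rw [v.start] at ha
    simp at ha
  have ha1 : (v.P a).2 = 1 := by
    have h1 := hmin (a - 1) (by omega)
    have h2 := v.step_cases_s17 (i := a - 1) (by omega)
    rw [show a - 1 + 1 = a by omega] at h2
    omega
  have hb := v.height_bound a halen
  have hb' := (v.fst_bound a (v.len - a) (by omega)).1
  rw [show a + (v.len - a) = v.len by omega] at hb'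
  have hlen := v.len_le
  have hpos := (v.mem_S a halen).1
  rcases lt_or_ge (v.P a).1 (g : ℤ) with hlt | hge
  ·
    -- `c` is the first time from `a` on at which the walk reaches the antidiagonal
    have hex' : ∃ c, a ≤ c ∧ (g : ℤ) + 1 ≤ (v.P c).1 + (v.P c).2 := ⟨v.len, halen, by omega⟩
    obtain ⟨c, ⟨hac, hc⟩, hcmin⟩ : ∃ c, (a ≤ c ∧ (g : ℤ) + 1 ≤ (v.P c).1 + (v.P c).2) ∧
        ∀ m < c, ¬ (a ≤ m ∧ (g : ℤ) + 1 ≤ (v.P m).1 + (v.P m).2) :=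
      ⟨Nat.find hex', Nat.find_spec hex', fun m hm => Nat.find_min hex' hm⟩
    have hclen : c ≤ v.len := by
      by_contra h
      exact hcmin v.len (by omega) ⟨halen, by omega⟩
    have hca : c ≠ a := by
      rintro rfl
      omega
    have h1 := hcmin (c - 1) (by omega)
    have h2 := v.step_cases_s17 (i := c - 1) (by omega)
    have h3 := (v.mem_S (c - 1) (by omega)).1
    rw [show c - 1 + 1 = c by omega] at h2
    have h4 := (v.fst_bound a (c - a) (by omega)).2
    rw [show a + (c - a) = c by omega] at h4
    have hy1 : 1 ≤ (v.P c).2 := by omega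
    have hy2 : (v.P c).2 ≤ (g : ℤ) - 1 := by omega
    have hsum : (v.P c).1 + (v.P c).2 = g + 1 := by omega
    refine ⟨(v.P c).1, (v.P c).2, by omega, hy1, hy2, ?_, c, hclen, rfl⟩
    obtain ⟨y, hy⟩ : ∃ y : ℕ, (v.P c).2 = y := ⟨(v.P c).2.toNat, by omega⟩
    refine ⟨2 * (L / 2) + y - g, ?_, ?_⟩
    · simp only [bigWalk]
      omega
    · simp only [bigWalk, bigPath]
      have : g ≤ L / 2 := by omega
      generalize L / 2 = K at *
      split_ifs <;> simp only [Prod.mk.injEq] <;> omega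
  · refine ⟨(v.P a).1, (v.P a).2, hpos, by omega, by omega, ?_, a, halen, rfl⟩
    obtain ⟨b, hbb⟩ : ∃ b : ℕ, (v.P a).1 = b := ⟨(v.P a).1.toNat, by omega⟩
    have hbK : b ≤ L / 2 := by omega
    refine ⟨2 * (L / 2) + 1 - b, ?_, ?_⟩
    · simp only [bigWalk]
      omega
    · simp only [bigWalk, bigPath]
      generalize L / 2 = K at *
      split_ifs <;> simp only [Prod.mk.injEq] <;> omega

/-! ### The numerical bound -/

lemma one_le_bound {d : ℝ} {M : ℝ} (hd : 1 ≤ d) (hM : d ≤ M) :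
    1 ≤ M * (1 - (d - 1) / Real.rpow d (1 + 1 / (d - 1))) := by
  have hd0 : 0 < d := by linarith
  have hpow : d ≤ Real.rpow d (1 + 1 / (d - 1)) := by
    have h : 0 ≤ 1 / (d - 1) := div_nonneg zero_le_one (by linarith)
    have := Real.rpow_le_rpow_of_exponent_le hd (show (1 : ℝ) ≤ 1 + 1 / (d - 1) by linarith)
    rwa [Real.rpow_one] at this
  have h1 : (d - 1) / Real.rpow d (1 + 1 / (d - 1)) ≤ (d - 1) / d :=
    div_le_div_of_nonneg_left (by linarith) hd0 hpow
  have h2 : (d - 1) / d = 1 - 1 / d := by field_simp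
  have h3 : 1 / d ≤ 1 - (d - 1) / Real.rpow d (1 + 1 / (d - 1)) := by linarith
  calc (1 : ℝ) = d * (1 / d) := by field_simp
    _ ≤ M * (1 - (d - 1) / Real.rpow d (1 + 1 / (d - 1))) :=
      mul_le_mul hM h3 (by positivity) (by linarith)

lemma catalan_le_morseWalkCount (g N : ℕ) (hN : 2 * g + 2 ≤ N) :
    catalan g ≤ morseWalkCount N g := by
  have hmem : g ∈ Finset.Icc g ((N - 2) / 2) := Finset.mem_Icc.2 ⟨le_rfl, by omega⟩
  have := Finset.single_le_sum
    (f := fun k => (2 * k + 1).choose (k + 1) / (2 * k + 1) * k.choose g)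
    (fun _ _ => Nat.zero_le _) hmem
  simpa [choose_div_eq_catalan, morseWalkCount] using this

lemma one_le_catalan (g : ℕ) : 1 ≤ catalan g := by
  have h := succ_mul_catalan_eq_centralBinom g
  have := Nat.centralBinom_pos g
  rw [← h] at this
  exact Nat.pos_of_mul_pos_left this

/-- For `g ≥ 2` and `N ≥ 2g + 2`, the graph `G_{N−2,g}` has exactly
`M_{N−2}` vertices and has a dominating set of at most
`M_{N−2}·(1 − Δ/(Δ+1)^{1+1/Δ})` walks, where `Δ + 1 = (1/(2g+1))·C(2g+1,g+1)` is the
`g`-th Catalan number. -/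
theorem morseWalkGraph_dominating_set (g N : ℕ) (hg : 2 ≤ g) (hN : 2 * g + 2 ≤ N) :
    Nat.card (MorseWalk (N - 2) g) = morseWalkCount N g ∧
    ∃ D : Set (MorseWalk (N - 2) g),
      (∀ v, v ∈ D ∨ ∃ u ∈ D, (morseWalkGraph (N - 2) g).Adj u v) ∧
      (D.ncard : ℝ) ≤ (morseWalkCount N g : ℝ) *
        (1 - ((catalan g : ℝ) - 1) /
          Real.rpow (catalan g : ℝ) (1 + 1 / ((catalan g : ℝ) - 1))) := by
  have hL : 2 * g ≤ N - 2 := by omega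
  refine ⟨card_morseWalk N g, {bigWalk (N - 2) g hg hL}, ?_, ?_⟩
  · intro v
    by_cases hv : v = bigWalk (N - 2) g hg hL
    · exact Or.inl hv
    · refine Or.inr ⟨_, rfl, ?_⟩
      rw [morseWalkGraph, SimpleGraph.fromRel_adj]
      exact ⟨fun h => hv h.symm, Or.inl (bigWalk_meets (N - 2) g hg hL v)⟩
  · rw [Set.ncard_singleton, Nat.cast_one]
    exact one_le_bound (by exact_mod_cast one_le_catalan g)
      (by exact_mod_cast catalan_le_morseWalkCount g N hN)
end
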